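/- Let H = ⟨Y|S⟩ be a finitely presented group with cusp complex 1-skeleton Γ⁽¹⁾_H̃ for parameters ψ > 1, ω > 0. Then every geodesic α in Γ⁽¹⁾_H̃ decomposes as α = α₁α₂α₃ where α₁ is a strictly descending path, α₂ is a level path whose shadow is a geodesic in H between the shadows of its endpoints, and α₃ is a strictly ascending path; moreover the length of the level part α₂ is at most 2ωψ. -/

import Mathlib

/-!
STATEMENT 9: In the 1-skeleton of the cusp complex of a finitely presented group
`H = ⟨Y|S⟩` (parameters `ψ > 1`, `ω > 0`), every geodesic `α` decomposes as
`α = α₁ α₂ α₃` with `α₁` strictly descending, `α₂` level with shadow a geodesic in `H`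
between the shadows of its endpoints, and `α₃` strictly ascending; moreover the level
part `α₂` has length at most `2ωψ`.
-/

open Set

variable {H : Type*} [Group H]

/-- Horizontal adjacency in the cusp complex. -/
def Horiz (Y : Set H) (u v : H × ℕ) : Prop :=
  u.2 = v.2 ∧ ∃ y : H, (y ∈ Y ∨ y⁻¹ ∈ Y) ∧ v.1 = u.1 * y

/-- Vertical adjacency in the cusp complex. -/
def Vert (u v : H × ℕ) : Prop :=
  u.1 = v.1 ∧ (v.2 = u.2 + 1 ∨ u.2 = v.2 + 1)

/-- Adjacency in the 1-skeleton of the cusp complex. -/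
def CuspAdj (Y : Set H) (u v : H × ℕ) : Prop := Horiz Y u v ∨ Vert u v

/-- Edge lengths in the cusp complex. -/
noncomputable def stepLen (ψ ω : ℝ) (u v : H × ℕ) : ℝ :=
  if u.2 = v.2 then ψ ^ (-(u.2 : ℝ)) else ω * Real.log ψ

/-- `p` is an edge path with `n` edges in the cusp complex. -/
def IsPathOn (Y : Set H) (p : ℕ → H × ℕ) (n : ℕ) : Prop :=
  ∀ k < n, CuspAdj Y (p k) (p (k + 1))

/-- Metric length of the edge path `p` (with `n` edges). -/
noncomputable def pathLen (ψ ω : ℝ) (p : ℕ → H × ℕ) (n : ℕ) : ℝ :=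
  ∑ k ∈ Finset.range n, stepLen ψ ω (p k) (p (k + 1))

/-- The induced path metric on the 1-skeleton of the cusp complex. -/
noncomputable def cuspDist (Y : Set H) (ψ ω : ℝ) (u v : H × ℕ) : ℝ :=
  sInf {c | ∃ (n : ℕ) (p : ℕ → H × ℕ),
    IsPathOn Y p n ∧ p 0 = u ∧ p n = v ∧ c = pathLen ψ ω p n}

/-- A geodesic edge path. -/
def IsGeodesicPath (Y : Set H) (ψ ω : ℝ) (p : ℕ → H × ℕ) (n : ℕ) : Prop :=
  IsPathOn Y p n ∧ pathLen ψ ω p n = cuspDist Y ψ ω (p 0) (p n)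

/-- Word (edge-path) distance in the Cayley graph of `H` with respect to `Y`;
the shadow of a level path is a geodesic in `H` iff its number of edges equals this
distance between the shadows of its endpoints. -/
noncomputable def cayleyDist (Y : Set H) (g h : H) : ℕ :=
  sInf {m : ℕ | ∃ q : ℕ → H, q 0 = g ∧ q m = h ∧
    ∀ k < m, ∃ y : H, (y ∈ Y ∨ y⁻¹ ∈ Y) ∧ q (k + 1) = q k * y}

/-!
Along a geodesic the depth is a concave function of the edge index. A corner where concavity fails
is a level edge followed by a descent, an ascent followed by a level edge, or an ascent followed by
a descent; in the first two cases the level edge can be moved one level deeper, where it is shorter,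
and in the third the path backtracks. Since the depth changes by at most one along each edge,
concavity forces the pattern descending, level, ascending.

The level part can be replaced by any path in the Cayley graph at the same depth, so its shadow is
a geodesic. If `ℓ` is its length, descending one level, following the same shadow and ascending
again has length `2 * ω * log ψ + ℓ / ψ`. Hence `ℓ * (1 - 1 / ψ) ≤ 2 * ω * log ψ`, and
`log ψ ≤ ψ - 1` gives `ℓ ≤ 2 * ω * ψ`.
-/

theorem exists_threshold_of_persistent {P : ℕ → Prop} {n : ℕ}
    (hP : ∀ k, k + 1 < n → P k → P (k + 1)) :
    ∃ i ≤ n, (∀ k < i, ¬P k) ∧ ∀ k, i ≤ k → k < n → P k := by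
  classical
  have hex : ∃ i, n ≤ i ∨ P i := ⟨n, .inl le_rfl⟩
  refine ⟨Nat.find hex, Nat.find_min' hex (.inl le_rfl),
    fun k hk hPk => Nat.find_min hex hk (.inr hPk), fun k hk => ?_⟩
  induction k, hk using Nat.le_induction with
  | base => exact fun hn => (Nat.find_spec hex).resolve_left hn.not_ge
  | succ k _ ih => exact fun hn => hP k hn (ih (by lia))

theorem exists_increasing_constant_decreasing_of_concave {d : ℕ → ℕ} {n : ℕ}
    (hd : ∀ k, k + 1 < n → d k + d (k + 2) ≤ 2 * d (k + 1)) :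
    ∃ i j : ℕ, i ≤ j ∧ j ≤ n ∧ (∀ k < i, d k < d (k + 1)) ∧
      (∀ k, i ≤ k → k < j → d (k + 1) = d k) ∧ ∀ k, j ≤ k → k < n → d (k + 1) < d k := by
  obtain ⟨i, hin, hlt_i, hge_i⟩ := exists_threshold_of_persistent (n := n)
    (P := fun k => d (k + 1) ≤ d k) fun k hk hle => by have := hd k hk; lia
  obtain ⟨j, hjn, hlt_j, hge_j⟩ := exists_threshold_of_persistent (n := n)
    (P := fun k => d (k + 1) < d k) fun k hk hlt => by have := hd k hk; lia
  have hij : i ≤ j := by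
    by_contra! hji
    exact hlt_i j hji (hge_j j le_rfl (hji.trans_le hin)).le
  exact ⟨i, j, hij, hjn, fun k hk => not_le.1 (hlt_i k hk),
    fun k hik hkj => (hge_i k hik (hkj.trans_le hjn)).antisymm (not_lt.1 (hlt_j k hkj)), hge_j⟩

theorem rpow_neg_natCast_lt_rpow_neg_natCast {x : ℝ} (hx : 1 < x) {d e : ℕ} (h : d < e) :
    x ^ (-(e : ℝ)) < x ^ (-(d : ℝ)) :=
  Real.rpow_lt_rpow_of_exponent_lt hx (neg_lt_neg (Nat.cast_lt.2 h))

theorem rpow_neg_natCast_succ {x : ℝ} (hx : x ≠ 0) (d : ℕ) :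
    x ^ (-((d + 1 : ℕ) : ℝ)) = x ^ (-(d : ℝ)) / x := by
  rw [← Real.rpow_sub_one hx, Nat.cast_succ, neg_add']

/-! ### Edges -/

section Edges

variable {Y : Set H} {u v : H × ℕ}

theorem CuspAdj.descends_of_lt (h : CuspAdj Y u v) (hlt : u.2 < v.2) :
    v.1 = u.1 ∧ v.2 = u.2 + 1 := by
  rcases h with ⟨hdepth, _⟩ | ⟨hshadow, hdepth⟩
  · lia
  · exact ⟨hshadow.symm, by lia⟩

theorem CuspAdj.ascends_of_lt (h : CuspAdj Y u v) (hlt : v.2 < u.2) :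
    v.1 = u.1 ∧ u.2 = v.2 + 1 := by
  rcases h with ⟨hdepth, _⟩ | ⟨hshadow, hdepth⟩
  · lia
  · exact ⟨hshadow.symm, by lia⟩

theorem CuspAdj.horiz_of_depth_eq (h : CuspAdj Y u v) (heq : v.2 = u.2) : Horiz Y u v :=
  h.resolve_right fun hvert => by have := hvert.2; lia

variable {G : Type*} {ψ ω : ℝ} {x y : G × ℕ}

theorem stepLen_of_depth_eq (h : x.2 = y.2) : stepLen ψ ω x y = ψ ^ (-(x.2 : ℝ)) :=
  if_pos h

theorem stepLen_of_depth_ne (h : x.2 ≠ y.2) : stepLen ψ ω x y = ω * Real.log ψ :=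
  if_neg h

theorem stepLen_nonneg (hψ : 1 ≤ ψ) (hω : 0 ≤ ω) (x y : G × ℕ) : 0 ≤ stepLen ψ ω x y := by
  have := Real.log_nonneg hψ
  unfold stepLen
  split_ifs <;> positivity

end Edges

/-! ### Concatenation of paths -/

section Concatenation

variable {α : Type*}

/-- The concatenation of the first `n` edges of `p` with `q`, where paths are encoded as sequences
of vertices. It is meant for `p n = q 0`; otherwise the vertex `q 0` is dropped. -/
def concatPath (p : ℕ → α) (n : ℕ) (q : ℕ → α) (k : ℕ) : α :=
  if k ≤ n then p k else q (k - n)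

theorem concatPath_of_le {p q : ℕ → α} {n k : ℕ} (hk : k ≤ n) : concatPath p n q k = p k :=
  if_pos hk

theorem concatPath_add {p q : ℕ → α} {n : ℕ} (hpq : p n = q 0) (k : ℕ) :
    concatPath p n q (n + k) = q k := by
  rcases Nat.eq_zero_or_pos k with rfl | hk
  · exact (concatPath_of_le le_rfl).trans hpq
  · rw [concatPath, if_neg (by lia), Nat.add_sub_cancel_left]

theorem pathLen_concatPath (ψ ω : ℝ) {p q : ℕ → α × ℕ} {m n : ℕ} (hpq : p n = q 0) :
    pathLen ψ ω (concatPath p n q) (n + m) = pathLen ψ ω p n + pathLen ψ ω q m := by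
  simp only [pathLen, Finset.sum_range_add, add_assoc, concatPath_add hpq]
  congr 1
  refine Finset.sum_congr rfl fun k hk => ?_
  have hkn := Finset.mem_range.1 hk
  rw [concatPath_of_le hkn.le, concatPath_of_le hkn]

theorem IsPathOn.concatPath {Y : Set H} {p q : ℕ → H × ℕ} {m n : ℕ} (hp : IsPathOn Y p n)
    (hq : IsPathOn Y q m) (hpq : p n = q 0) : IsPathOn Y (concatPath p n q) (n + m) := by
  intro k hk
  rcases lt_or_ge k n with hkn | hnk
  · rw [concatPath_of_le hkn.le, concatPath_of_le hkn]
    exact hp k hkn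
  · obtain ⟨l, rfl⟩ := Nat.exists_eq_add_of_le hnk
    rw [add_assoc, concatPath_add hpq, concatPath_add hpq]
    exact hq l (by lia)

end Concatenation

/-! ### Lengths of paths between two vertices -/

/-- The vertices `u` and `v` are joined by an edge path of length `c`. Working with this relation
instead of `cuspDist` avoids the junk value of `cuspDist` between different components. -/
def HasPathOfLength (Y : Set H) (ψ ω : ℝ) (u v : H × ℕ) (c : ℝ) : Prop :=
  ∃ (n : ℕ) (p : ℕ → H × ℕ), IsPathOn Y p n ∧ p 0 = u ∧ p n = v ∧ c = pathLen ψ ω p n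

/-- The length of the part of the edge path `p` between its vertices of indices `a` and `b`. -/
noncomputable def segmentLen {G : Type*} (ψ ω : ℝ) (p : ℕ → G × ℕ) (a b : ℕ) : ℝ :=
  ∑ k ∈ Finset.Ico a b, stepLen ψ ω (p k) (p (k + 1))

theorem segmentLen_add_segmentLen {G : Type*} (ψ ω : ℝ) (p : ℕ → G × ℕ) {a b c : ℕ} (hab : a ≤ b)
    (hbc : b ≤ c) : segmentLen ψ ω p a b + segmentLen ψ ω p b c = segmentLen ψ ω p a c :=
  Finset.sum_Ico_consecutive _ hab hbc

section Lengths

variable {Y : Set H} {ψ ω : ℝ} {u v w : H × ℕ} {c d : ℝ} {p : ℕ → H × ℕ} {n a b : ℕ}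

theorem HasPathOfLength.refl (Y : Set H) (ψ ω : ℝ) (u : H × ℕ) : HasPathOfLength Y ψ ω u u 0 :=
  ⟨0, fun _ => u, fun _ hk => absurd hk (Nat.not_lt_zero _), rfl, rfl, by simp [pathLen]⟩

theorem CuspAdj.hasPathOfLength (h : CuspAdj Y u v) (ψ ω : ℝ) :
    HasPathOfLength Y ψ ω u v (stepLen ψ ω u v) := by
  refine ⟨1, fun k => if k = 0 then u else v, fun k hk => ?_, rfl, rfl, by simp [pathLen]⟩
  obtain rfl : k = 0 := by lia
  exact h

theorem HasPathOfLength.trans (huv : HasPathOfLength Y ψ ω u v c)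
    (hvw : HasPathOfLength Y ψ ω v w d) : HasPathOfLength Y ψ ω u w (c + d) := by
  obtain ⟨n, p, hp, rfl, hpn, rfl⟩ := huv
  obtain ⟨m, q, hq, rfl, rfl, rfl⟩ := hvw
  exact ⟨n + m, concatPath p n q, hp.concatPath hq hpn, concatPath_of_le n.zero_le,
    concatPath_add hpn m, (pathLen_concatPath ψ ω hpn).symm⟩

theorem IsPathOn.hasPathOfLength_segmentLen (hp : IsPathOn Y p n) (ψ ω : ℝ) (hab : a ≤ b)
    (hbn : b ≤ n) : HasPathOfLength Y ψ ω (p a) (p b) (segmentLen ψ ω p a b) := by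
  refine ⟨b - a, fun k => p (a + k), fun k hk => hp (a + k) (by lia), rfl, ?_, ?_⟩
  · simp only [Nat.add_sub_cancel' hab]
  · exact Finset.sum_Ico_eq_sum_range _ a b

theorem cuspDist_le_of_hasPathOfLength (hψ : 1 ≤ ψ) (hω : 0 ≤ ω)
    (h : HasPathOfLength Y ψ ω u v c) : cuspDist Y ψ ω u v ≤ c := by
  refine csInf_le ⟨0, ?_⟩ h
  rintro _ ⟨n, p, -, -, -, rfl⟩
  exact Finset.sum_nonneg fun k _ => stepLen_nonneg hψ hω _ _

theorem IsGeodesicPath.segmentLen_le (hψ : 1 ≤ ψ) (hω : 0 ≤ ω) (hp : IsGeodesicPath Y ψ ω p n)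
    (hab : a ≤ b) (hbn : b ≤ n) (hc : HasPathOfLength Y ψ ω (p a) (p b) c) :
    segmentLen ψ ω p a b ≤ c := by
  have hrerouted := ((hp.1.hasPathOfLength_segmentLen ψ ω a.zero_le (hab.trans hbn)).trans hc).trans
    (hp.1.hasPathOfLength_segmentLen ψ ω hbn le_rfl)
  have hle : segmentLen ψ ω p 0 n ≤ segmentLen ψ ω p 0 a + c + segmentLen ψ ω p b n :=
    calc segmentLen ψ ω p 0 n = cuspDist Y ψ ω (p 0) (p n) := by
          rw [← hp.2, segmentLen, pathLen, Finset.range_eq_Ico]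
      _ ≤ _ := cuspDist_le_of_hasPathOfLength hψ hω hrerouted
  rw [← segmentLen_add_segmentLen ψ ω p (a.zero_le.trans hab) hbn,
    ← segmentLen_add_segmentLen ψ ω p a.zero_le hab] at hle
  linarith

end Lengths

/-! ### Concavity of the depth -/

section Concavity

variable {Y : Set H} {ψ ω : ℝ} {u v w : H × ℕ}

theorem exists_shorter_path_of_horiz_of_descent (hψ : 1 < ψ) (huv : Horiz Y u v) (hvw : Vert v w)
    (hlt : v.2 < w.2) :
    ∃ c < stepLen ψ ω u v + stepLen ψ ω v w, HasPathOfLength Y ψ ω u w c := by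
  have hdepth : w.2 = u.2 + 1 := by have := huv.1; have := hvw.2; lia
  have hdown : CuspAdj Y u (u.1, w.2) := .inr ⟨rfl, .inl hdepth⟩
  have hacross : CuspAdj Y (u.1, w.2) w := .inl ⟨rfl, hvw.1 ▸ huv.2⟩
  refine ⟨_, ?_, (hdown.hasPathOfLength ψ ω).trans (hacross.hasPathOfLength ψ ω)⟩
  rw [stepLen_of_depth_eq huv.1, stepLen_of_depth_ne hlt.ne,
    stepLen_of_depth_ne (y := (u.1, w.2)) (by lia), stepLen_of_depth_eq (y := w) (by rfl), add_comm]
  exact add_lt_add_left (rpow_neg_natCast_lt_rpow_neg_natCast hψ (huv.1 ▸ hlt)) _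

theorem exists_shorter_path_of_ascent_of_horiz (hψ : 1 < ψ) (huv : Vert u v) (hvw : Horiz Y v w)
    (hlt : v.2 < u.2) :
    ∃ c < stepLen ψ ω u v + stepLen ψ ω v w, HasPathOfLength Y ψ ω u w c := by
  have hdepth : u.2 = w.2 + 1 := by have := hvw.1; have := huv.2; lia
  have hacross : CuspAdj Y u (w.1, u.2) := .inl ⟨rfl, huv.1 ▸ hvw.2⟩
  have hup : CuspAdj Y (w.1, u.2) w := .inr ⟨rfl, .inr hdepth⟩
  refine ⟨_, ?_, (hacross.hasPathOfLength ψ ω).trans (hup.hasPathOfLength ψ ω)⟩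
  rw [stepLen_of_depth_ne hlt.ne', stepLen_of_depth_eq hvw.1,
    stepLen_of_depth_eq (x := u) (by rfl), stepLen_of_depth_ne (x := (w.1, u.2)) (by lia), add_comm]
  exact add_lt_add_right (rpow_neg_natCast_lt_rpow_neg_natCast hψ hlt) _

theorem exists_shorter_path_of_ascent_of_descent (hψ : 1 < ψ) (hω : 0 < ω) (huv : Vert u v)
    (hvw : Vert v w) (hu : v.2 < u.2) (hw : v.2 < w.2) :
    ∃ c < stepLen ψ ω u v + stepLen ψ ω v w, HasPathOfLength Y ψ ω u w c := by
  obtain rfl : u = w := Prod.ext (huv.1.trans hvw.1) (by have := huv.2; have := hvw.2; lia)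
  refine ⟨0, ?_, .refl Y ψ ω u⟩
  rw [stepLen_of_depth_ne hu.ne', stepLen_of_depth_ne hw.ne]
  have := Real.log_pos hψ
  positivity

theorem exists_shorter_path_of_not_concave (hψ : 1 < ψ) (hω : 0 < ω) (huv : CuspAdj Y u v)
    (hvw : CuspAdj Y v w) (hdepth : 2 * v.2 < u.2 + w.2) :
    ∃ c < stepLen ψ ω u v + stepLen ψ ω v w, HasPathOfLength Y ψ ω u w c := by
  rcases huv with huv | huv <;> rcases hvw with hvw | hvw
  · have := huv.1
    have := hvw.1
    lia
  · exact exists_shorter_path_of_horiz_of_descent hψ huv hvw (by have := huv.1; lia)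
  · exact exists_shorter_path_of_ascent_of_horiz hψ huv hvw (by have := hvw.1; lia)
  · have := huv.2
    have := hvw.2
    exact exists_shorter_path_of_ascent_of_descent hψ hω huv hvw (by lia) (by lia)

theorem IsGeodesicPath.depth_concave {p : ℕ → H × ℕ} {n k : ℕ} (hψ : 1 < ψ) (hω : 0 < ω)
    (hp : IsGeodesicPath Y ψ ω p n) (hk : k + 1 < n) :
    (p k).2 + (p (k + 2)).2 ≤ 2 * (p (k + 1)).2 := by
  by_contra! hdepth
  obtain ⟨c, hlt, hc⟩ := exists_shorter_path_of_not_concave hψ hω (hp.1 k (by lia))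
    (hp.1 (k + 1) hk) hdepth
  have hle := hp.segmentLen_le hψ.le hω.le (by lia) hk hc
  rw [segmentLen, Finset.sum_Ico_succ_top (by lia), Nat.Ico_succ_singleton,
    Finset.sum_singleton] at hle
  exact hle.not_gt hlt

end Concavity

/-! ### Level paths and their shadows -/

/-- `q` is an edge path with `m` edges in the Cayley graph of `H` with respect to `Y`. -/
def IsCayleyPath (Y : Set H) (q : ℕ → H) (m : ℕ) : Prop :=
  ∀ k < m, ∃ y : H, (y ∈ Y ∨ y⁻¹ ∈ Y) ∧ q (k + 1) = q k * y

/-- The part of `p` between its vertices of indices `i` and `j` is a level path. -/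
def IsLevelOn {G : Type*} (p : ℕ → G × ℕ) (i j : ℕ) : Prop :=
  ∀ k, i ≤ k → k < j → (p (k + 1)).2 = (p k).2

section LevelDepth

variable {G : Type*} {p : ℕ → G × ℕ} {i j : ℕ}

theorem IsLevelOn.depth_eq (h : IsLevelOn p i j) {k : ℕ} (hik : i ≤ k) (hkj : k ≤ j) :
    (p k).2 = (p i).2 := by
  induction k, hik using Nat.le_induction with
  | base => rfl
  | succ k hik ih => exact (h k hik hkj).trans (ih (by lia))

theorem IsLevelOn.eq_mk_depth (h : IsLevelOn p i j) (hij : i ≤ j) : p j = ((p j).1, (p i).2) :=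
  Prod.ext rfl (h.depth_eq hij le_rfl)

theorem IsLevelOn.segmentLen_eq (h : IsLevelOn p i j) (ψ ω : ℝ) :
    segmentLen ψ ω p i j = (j - i : ℕ) * ψ ^ (-((p i).2 : ℝ)) := by
  have hstep : ∀ k ∈ Finset.Ico i j, stepLen ψ ω (p k) (p (k + 1)) = ψ ^ (-((p i).2 : ℝ)) := by
    intro k hk
    obtain ⟨hik, hkj⟩ := Finset.mem_Ico.1 hk
    rw [stepLen_of_depth_eq (h k hik hkj).symm, h.depth_eq hik hkj.le]
  rw [segmentLen, Finset.sum_congr rfl hstep, Finset.sum_const, Nat.card_Ico, nsmul_eq_mul]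

end LevelDepth

section Level

variable {Y : Set H} {ψ ω : ℝ} {q : ℕ → H} {p : ℕ → H × ℕ} {m n i j : ℕ}

theorem IsCayleyPath.cayleyDist_le (hq : IsCayleyPath Y q m) : cayleyDist Y (q 0) (q m) ≤ m :=
  Nat.sInf_le ⟨q, rfl, rfl, hq⟩

theorem IsCayleyPath.exists_path_cayleyDist (hq : IsCayleyPath Y q m) :
    ∃ r : ℕ → H, r 0 = q 0 ∧ r (cayleyDist Y (q 0) (q m)) = q m ∧
      IsCayleyPath Y r (cayleyDist Y (q 0) (q m)) :=
  Nat.sInf_mem (s := {l | ∃ r : ℕ → H, r 0 = q 0 ∧ r l = q m ∧ IsCayleyPath Y r l})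
    ⟨m, q, rfl, rfl, hq⟩

theorem IsCayleyPath.hasPathOfLength_level (hq : IsCayleyPath Y q m) (ψ ω : ℝ) (d : ℕ) :
    HasPathOfLength Y ψ ω (q 0, d) (q m, d) (m * ψ ^ (-(d : ℝ))) :=
  ⟨m, fun k => (q k, d), fun k hk => Or.inl ⟨rfl, hq k hk⟩, rfl, rfl, by simp [pathLen, stepLen]⟩

theorem IsCayleyPath.hasPathOfLength_detour (hq : IsCayleyPath Y q m) (ψ ω : ℝ) (d : ℕ) :
    HasPathOfLength Y ψ ω (q 0, d) (q m, d)
      (ω * Real.log ψ + m * ψ ^ (-((d + 1 : ℕ) : ℝ)) + ω * Real.log ψ) := by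
  have hdown : CuspAdj Y (q 0, d) (q 0, d + 1) := .inr ⟨rfl, .inl rfl⟩
  have hup : CuspAdj Y (q m, d + 1) (q m, d) := .inr ⟨rfl, .inr rfl⟩
  have hdetour := ((hdown.hasPathOfLength ψ ω).trans (hq.hasPathOfLength_level ψ ω (d + 1))).trans
    (hup.hasPathOfLength ψ ω)
  rwa [stepLen_of_depth_ne (by simp), stepLen_of_depth_ne (by simp)] at hdetour

theorem IsLevelOn.isCayleyPath_shadow (h : IsLevelOn p i j) (hp : IsPathOn Y p n) (hjn : j ≤ n) :
    IsCayleyPath Y (fun k => (p (i + k)).1) (j - i) := fun k hk =>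
  ((hp (i + k) (by lia)).horiz_of_depth_eq (h (i + k) (by lia) (by lia))).2

theorem IsGeodesicPath.cayleyDist_eq_of_isLevelOn (hψ : 1 ≤ ψ) (hω : 0 ≤ ω)
    (hp : IsGeodesicPath Y ψ ω p n) (hij : i ≤ j) (hjn : j ≤ n) (hlevel : IsLevelOn p i j) :
    cayleyDist Y (p i).1 (p j).1 = j - i := by
  have hshadow := hlevel.isCayleyPath_shadow hp.1 hjn
  have hle := hshadow.cayleyDist_le
  obtain ⟨r, hr0, hrm, hr⟩ := hshadow.exists_path_cayleyDist
  simp only [add_zero, Nat.add_sub_cancel' hij] at hle hr0 hrm hr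
  refine hle.antisymm ?_
  have hpath := hr.hasPathOfLength_level ψ ω (p i).2
  rw [hr0, hrm, ← hlevel.eq_mk_depth hij] at hpath
  have hlen := hp.segmentLen_le hψ hω hij hjn hpath
  rw [hlevel.segmentLen_eq] at hlen
  have hedge : 0 < ψ ^ (-((p i).2 : ℝ)) := by positivity
  exact_mod_cast le_of_mul_le_mul_right hlen hedge

theorem le_two_mul_mul_of_le_detour {ℓ : ℝ} (hψ : 1 < ψ) (hω : 0 ≤ ω)
    (h : ℓ ≤ ω * Real.log ψ + ℓ / ψ + ω * Real.log ψ) : ℓ ≤ 2 * ω * ψ := by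
  have hψ0 : 0 < ψ := one_pos.trans hψ
  have hscaled : ℓ / ψ * (ψ - 1) ≤ 2 * ω * (ψ - 1) :=
    calc ℓ / ψ * (ψ - 1) = ℓ - ℓ / ψ := by field_simp
      _ ≤ 2 * ω * Real.log ψ := by linarith
      _ ≤ 2 * ω * (ψ - 1) := by gcongr; exact Real.log_le_sub_one_of_pos hψ0
  exact (div_le_iff₀ hψ0).1 (le_of_mul_le_mul_right hscaled (sub_pos.2 hψ))

theorem IsGeodesicPath.segmentLen_le_of_isLevelOn (hψ : 1 < ψ) (hω : 0 ≤ ω)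
    (hp : IsGeodesicPath Y ψ ω p n) (hij : i ≤ j) (hjn : j ≤ n) (hlevel : IsLevelOn p i j) :
    segmentLen ψ ω p i j ≤ 2 * ω * ψ := by
  have hdetour := (hlevel.isCayleyPath_shadow hp.1 hjn).hasPathOfLength_detour ψ ω (p i).2
  simp only [add_zero, Nat.add_sub_cancel' hij] at hdetour
  rw [← hlevel.eq_mk_depth hij, rpow_neg_natCast_succ (one_pos.trans hψ).ne', ← mul_div_assoc,
    ← hlevel.segmentLen_eq] at hdetour
  exact le_two_mul_mul_of_le_detour hψ hω (hp.segmentLen_le hψ.le hω hij hjn hdetour)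

end Level

theorem cusp_geodesic_decomposition_general
    (Y : Set H) (ψ ω : ℝ) (hψ : 1 < ψ) (hω : 0 < ω)
    (p : ℕ → H × ℕ) (n : ℕ) (hp : IsGeodesicPath Y ψ ω p n) :
    ∃ i j : ℕ, i ≤ j ∧ j ≤ n ∧
      (∀ k < i, (p (k + 1)).1 = (p k).1 ∧ (p (k + 1)).2 = (p k).2 + 1) ∧
      (∀ k, i ≤ k → k < j → (p (k + 1)).2 = (p k).2) ∧
      (∀ k, j ≤ k → k < n → (p (k + 1)).1 = (p k).1 ∧ (p k).2 = (p (k + 1)).2 + 1) ∧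
      cayleyDist Y (p i).1 (p j).1 = j - i ∧
      (∑ k ∈ Finset.Ico i j, stepLen ψ ω (p k) (p (k + 1))) ≤ 2 * ω * ψ := by
  obtain ⟨i, j, hij, hjn, hdesc, hlevel, hasc⟩ :=
    exists_increasing_constant_decreasing_of_concave (n := n) (d := fun k => (p k).2)
      fun _ hk => hp.depth_concave hψ hω hk
  exact ⟨i, j, hij, hjn,
    fun k hk => (hp.1 k (by lia)).descends_of_lt (hdesc k hk),
    hlevel,
    fun k hjk hkn => (hp.1 k hkn).ascends_of_lt (hasc k hjk hkn),
    hp.cayleyDist_eq_of_isLevelOn hψ.le hω.le hij hjn hlevel,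
    hp.segmentLen_le_of_isLevelOn hψ hω.le hij hjn hlevel⟩

/-- Decomposition of geodesics in the cusp complex into a strictly descending part,
a level part whose shadow is a geodesic of `H` and whose length is at most `2ωψ`,
and a strictly ascending part. -/
theorem cusp_geodesic_decomposition
    (Y : Set H) (hYfin : Y.Finite) (hYgen : Subgroup.closure Y = ⊤)
    (ψ ω : ℝ) (hψ : 1 < ψ) (hω : 0 < ω)
    (p : ℕ → H × ℕ) (n : ℕ) (hp : IsGeodesicPath Y ψ ω p n) :
    ∃ i j : ℕ, i ≤ j ∧ j ≤ n ∧
      (∀ k < i, (p (k + 1)).1 = (p k).1 ∧ (p (k + 1)).2 = (p k).2 + 1) ∧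
      (∀ k, i ≤ k → k < j → (p (k + 1)).2 = (p k).2) ∧
      (∀ k, j ≤ k → k < n → (p (k + 1)).1 = (p k).1 ∧ (p k).2 = (p (k + 1)).2 + 1) ∧
      cayleyDist Y (p i).1 (p j).1 = j - i ∧
      (∑ k ∈ Finset.Ico i j, stepLen ψ ω (p k) (p (k + 1))) ≤ 2 * ω * ψ :=
  cusp_geodesic_decomposition_general Y ψ ω hψ hω p n hp
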